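/- Let n ≥ 1, γ > 0 a real number, and l ∈ ℕ. For each l set D_l := ∏_{i=0}^{l−1} (γ + i). Then for every x ∈ ℝⁿ \ {0} and all indices i₁, …, i_l ∈ {1, …, n}, the l-th order partial derivative of the function x ↦ ‖x‖^{−γ} satisfies |∂_{i₁} ⋯ ∂_{i_l} (‖x‖^{−γ})| ≤ D_l ‖x‖^{−(γ+l)}. -/

import Mathlib

open MeasureTheory Metric Filter Topology Manifold

/-!
Restricted to the line `t ↦ x + t v`, the function `‖·‖ ^ (-γ)` equals
`‖x‖ ^ (-γ) * (1 + ζ t) ^ (-γ/2) * (1 + conj ζ t) ^ (-γ/2)` near `t = 0`, for a complex number `ζ`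
of modulus `‖v‖ / ‖x‖`. Differentiating `(1 + ζ t) ^ (-a) * (1 + ω t) ^ (-b)` raises one of `a`, `b`
by one and brings it down as a factor, so each derivative contributes a total factor `a + b`; this
bounds the pure derivatives `∂_v ⋯ ∂_v` by `D_l`. Mixed derivatives reduce to pure ones by Banach's
theorem: a symmetric multilinear map on an inner product space attains its norm on the diagonal in
finite dimension. To see this, take a maximizer of `‖f v‖` over tuples of unit vectors with
`‖∑ k, v k‖` as large as possible; averaging two distinct entries would enlarge the sum.
-/

section Banach

open Function Finset

variable {ι E G : Type*}

@[to_additive]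
theorem prod_update_update [Fintype ι] [DecidableEq ι] {M : Type*} [CommMonoid M] {i j : ι}
    (hij : i ≠ j) (v : ι → M) (x y : M) :
    ∏ k, update (update v i x) j y k = (∏ k ∈ (univ \ {j}) \ {i}, v k) * (x * y) := by
  rw [prod_update_of_mem (mem_univ j), prod_update_of_mem (by simpa using hij), mul_comm,
    mul_comm x, mul_assoc]

theorem norm_add_add_lt_max_of_ne [NormedAddCommGroup E] [NormedSpace ℝ E] [StrictConvexSpace ℝ E]
    {a b u : E} (ha : ‖a‖ = 1) (hb : ‖b‖ = 1) (hu : ‖u‖ = 1) (hab : a + b = ‖a + b‖ • u)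
    (hne : a ≠ b) (r : E) :
    ‖r + (a + b)‖ < max ‖r + (u + u)‖ ‖r + (-u + -u)‖ := by
  have hlt : ‖a + b‖ < 2 := by
    have := norm_combo_lt_of_ne ha.le hb.le hne one_half_pos one_half_pos (add_halves 1)
    rw [← smul_add, norm_smul, Real.norm_of_nonneg one_half_pos.le] at this
    linarith
  have hend : r + (u + u) ≠ r + (-u + -u) := fun h => by
    have h4 : (4 : ℝ) • u = (r + (u + u)) - (r + (-u + -u)) := by module
    rw [h, sub_self, smul_eq_zero] at h4
    simp [h4.resolve_left four_ne_zero] at hu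
  -- `r + (a + b)` lies strictly between `r - 2u` and `r + 2u`.
  have hcombo := norm_combo_lt_of_ne (le_max_left ‖r + (u + u)‖ ‖r + (-u + -u)‖)
    (le_max_right _ _) hend (a := (2 + ‖a + b‖) / 4) (b := (2 - ‖a + b‖) / 4)
    (by positivity) (by linarith) (by ring)
  convert hcombo using 2
  conv_lhs => rw [hab]
  module

theorem exists_unit_le_norm_apply_self [NormedAddCommGroup E] [InnerProductSpace ℝ E]
    [SeminormedAddCommGroup G] [NormedSpace ℝ G] (B : E →ₗ[ℝ] E →ₗ[ℝ] G) {a b : E}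
    (ha : ‖a‖ = 1) (hb : ‖b‖ = 1) (hsymm : B a b = B b a)
    (hdiag : ∀ x, ‖B x x‖ ≤ ‖B a b‖ * ‖x‖ ^ 2) :
    ∃ u, ‖u‖ = 1 ∧ a + b = ‖a + b‖ • u ∧ ‖B a b‖ ≤ ‖B u u‖ := by
  rcases eq_or_ne (a + b) 0 with h0 | h0
  · obtain rfl : b = -a := (neg_eq_of_add_eq_zero_right h0).symm
    exact ⟨a, ha, by simp, by simp⟩
  have hab : a + b = ‖a + b‖ • NormedSpace.normalize (a + b) :=
    (NormedSpace.norm_smul_normalize _).symm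
  refine ⟨NormedSpace.normalize (a + b), NormedSpace.norm_normalize_eq_one_iff.2 h0, hab, ?_⟩
  set u := NormedSpace.normalize (a + b)
  have hpolar : (4 : ℝ) • B a b = B (a + b) (a + b) - B (a - b) (a - b) := by
    simp only [map_add, map_sub, LinearMap.add_apply, LinearMap.sub_apply, ← hsymm]
    module
  have hplus : ‖B (a + b) (a + b)‖ = ‖a + b‖ ^ 2 * ‖B u u‖ := by
    conv_lhs => rw [hab]
    simp only [map_smul, LinearMap.smul_apply, norm_smul, norm_norm]
    ring
  have hparallelogram : ‖a - b‖ ^ 2 = 4 - ‖a + b‖ ^ 2 := by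
    have := parallelogram_law_with_norm ℝ a b
    rw [ha, hb] at this
    linarith
  have hbound : 4 * ‖B a b‖ ≤ ‖a + b‖ ^ 2 * ‖B u u‖ + ‖B a b‖ * (4 - ‖a + b‖ ^ 2) :=
    calc 4 * ‖B a b‖ = ‖B (a + b) (a + b) - B (a - b) (a - b)‖ := by
          rw [← hpolar, norm_smul, Real.norm_ofNat]
      _ ≤ ‖B (a + b) (a + b)‖ + ‖B (a - b) (a - b)‖ := norm_sub_le _ _
      _ ≤ _ := by rw [hplus, ← hparallelogram]; gcongr; exact hdiag _
  have hpos : 0 < ‖a + b‖ ^ 2 := by positivity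
  exact le_of_mul_le_mul_left (by linarith) hpos

section BilinearSlice

variable {R N P : Type*} [DecidableEq ι] [CommSemiring R] [AddCommMonoid N] [Module R N]
  [AddCommMonoid P] [Module R P]

/-- The bilinear map obtained from a multilinear map `f` by letting only the arguments in the
distinct positions `i` and `j` vary, the others being those of `v`. -/
def bilinearSlice (f : MultilinearMap R (fun _ : ι => N) P) (v : ι → N) {i j : ι} (hij : i ≠ j) :
    N →ₗ[R] N →ₗ[R] P :=
  LinearMap.mk₂ R (fun x y => f (update (update v i x) j y))
    (fun x x' y => by simp only [update_comm hij, f.map_update_add])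
    (fun c x y => by simp only [update_comm hij, f.map_update_smul])
    (fun x y y' => f.map_update_add _ _ _ _)
    (fun c x y => f.map_update_smul _ _ _ _)

theorem bilinearSlice_apply (f : MultilinearMap R (fun _ : ι => N) P) (v : ι → N) {i j : ι}
    (hij : i ≠ j) (x y : N) :
    bilinearSlice f v hij x y = f (update (update v i x) j y) :=
  rfl

theorem bilinearSlice_comm {f : MultilinearMap R (fun _ : ι => N) P}
    (hf : ∀ (v : ι → N) (σ : Equiv.Perm ι), f (v ∘ σ) = f v) (v : ι → N) {i j : ι} (hij : i ≠ j)
    (x y : N) :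
    bilinearSlice f v hij x y = bilinearSlice f v hij y x := by
  have hswap : update (update v i y) j x ∘ Equiv.swap i j = update (update v i x) j y := by
    rw [Equiv.comp_swap_eq_update, update_self, update_of_ne hij, update_self, update_idem,
      update_comm hij.symm, update_idem]
  rw [bilinearSlice_apply, bilinearSlice_apply, ← hswap, hf]

end BilinearSlice

variable [Fintype ι] [NormedAddCommGroup E] [SeminormedAddCommGroup G] [NormedSpace ℝ G]

theorem opNorm_le_of_forall_norm_eq_one [NormedSpace ℝ E]
    {f : ContinuousMultilinearMap ℝ (fun _ : ι => E) G} {C : ℝ} (hC : 0 ≤ C)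
    (hunit : ∀ v : ι → E, (∀ k, ‖v k‖ = 1) → ‖f v‖ ≤ C) : ‖f‖ ≤ C := by
  refine ContinuousMultilinearMap.opNorm_le_bound hC fun m => ?_
  by_cases hm : ∃ k, m k = 0
  · obtain ⟨k, hk⟩ := hm
    rw [f.map_coord_zero k hk, norm_zero]
    positivity
  push Not at hm
  calc ‖f m‖ = ‖f fun k => ‖m k‖ • NormedSpace.normalize (m k)‖ := by
        simp only [NormedSpace.norm_smul_normalize]
    _ = (∏ k, ‖m k‖) * ‖f fun k => NormedSpace.normalize (m k)‖ := by
        rw [f.map_smul_univ, norm_smul, Real.norm_of_nonneg (by positivity)]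
    _ ≤ (∏ k, ‖m k‖) * C := by
        gcongr
        exact hunit _ fun k => NormedSpace.norm_normalize_eq_one_iff.2 (hm k)
    _ = C * ∏ k, ‖m k‖ := mul_comm _ _

theorem exists_unit_norm_apply_eq_opNorm [NormedSpace ℝ E] [ProperSpace E] [Nontrivial E]
    (f : ContinuousMultilinearMap ℝ (fun _ : ι => E) G) :
    ∃ v : ι → E, (∀ k, ‖v k‖ = 1) ∧ ‖f v‖ = ‖f‖ := by
  have hcompact : IsCompact (Set.univ.pi fun _ : ι => sphere (0 : E) 1) :=
    isCompact_univ_pi fun _ => isCompact_sphere _ _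
  obtain ⟨e, he⟩ := exists_norm_eq E zero_le_one
  obtain ⟨v, hv, hmax⟩ := hcompact.exists_isMaxOn ⟨fun _ => e, by simp [he]⟩
    f.cont.norm.continuousOn
  have hv1 : ∀ k, ‖v k‖ = 1 := by simpa using hv
  refine ⟨v, hv1, le_antisymm ?_ ?_⟩
  · simpa [hv1] using f.le_opNorm v
  · exact opNorm_le_of_forall_norm_eq_one (norm_nonneg _) fun w hw => hmax (by simpa using hw)

theorem exists_unit_norm_apply_eq_opNorm_norm_sum_lt [InnerProductSpace ℝ E]
    {f : ContinuousMultilinearMap ℝ (fun _ : ι => E) G}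
    (hf : ∀ (v : ι → E) (σ : Equiv.Perm ι), f (v ∘ σ) = f v) {v : ι → E} (hv : ∀ k, ‖v k‖ = 1)
    (hfv : ‖f v‖ = ‖f‖) {i j : ι} (hne : v i ≠ v j) :
    ∃ w : ι → E, (∀ k, ‖w k‖ = 1) ∧ ‖f w‖ = ‖f‖ ∧ ‖∑ k, v k‖ < ‖∑ k, w k‖ := by
  classical
  have hij : i ≠ j := fun h => hne (h ▸ rfl)
  set B := bilinearSlice f.toMultilinearMap v hij
  have hB (x y : E) : B x y = f (update (update v i x) j y) :=
    bilinearSlice_apply f.toMultilinearMap v hij x y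
  have hBv : ‖B (v i) (v j)‖ = ‖f‖ := by
    rw [hB, update_eq_self, update_eq_self, hfv]
  have hB_le (x : E) : ‖B x x‖ ≤ ‖f‖ * ‖x‖ ^ 2 := by
    refine (f.le_opNorm _).trans_eq ?_
    simp only [apply_update (fun _ => norm), prod_update_update hij, hv, prod_const_one]
    ring
  obtain ⟨u, hu, hsum, hBu⟩ := exists_unit_le_norm_apply_self B (hv i) (hv j)
    (bilinearSlice_comm hf v hij _ _) (by simpa only [hBv] using hB_le)
  rw [hBv] at hBu
  have hsum_v : ∑ k, v k = (∑ k ∈ (univ \ {j}) \ {i}, v k) + (v i + v j) := by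
    simpa using sum_update_update hij v (v i) (v j)
  -- Replacing `v i` and `v j` by `u` or by `-u`, where `u` is the direction of `v i + v j`, keeps
  -- `‖f v‖` maximal; the better of the two signs increases `‖∑ k, v k‖`.
  have hreplace (u' : E) (hu' : ‖u'‖ = 1) (hBu' : ‖f‖ ≤ ‖B u' u'‖)
      (hlt : ‖∑ k, v k‖ < ‖(∑ k ∈ (univ \ {j}) \ {i}, v k) + (u' + u')‖) :
      ∃ w : ι → E, (∀ k, ‖w k‖ = 1) ∧ ‖f w‖ = ‖f‖ ∧ ‖∑ k, v k‖ < ‖∑ k, w k‖ := by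
    refine ⟨update (update v i u') j u', ?_, le_antisymm ?_ hBu', ?_⟩
    · simp +contextual [update_apply, apply_ite norm, hu', hv]
    · simpa [hu', hB] using hB_le u'
    · rwa [sum_update_update hij]
  rcases lt_max_iff.1 (norm_add_add_lt_max_of_ne (hv i) (hv j) hu hsum hne
    (∑ k ∈ (univ \ {j}) \ {i}, v k)) with hlt | hlt
  · exact hreplace u hu hBu (hsum_v ▸ hlt)
  · exact hreplace (-u) (by rwa [norm_neg]) (by simpa using hBu) (hsum_v ▸ hlt)

theorem exists_unit_norm_apply_diag_eq_opNorm [InnerProductSpace ℝ E] [ProperSpace E] [Nontrivial E]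
    {f : ContinuousMultilinearMap ℝ (fun _ : ι => E) G}
    (hf : ∀ (v : ι → E) (σ : Equiv.Perm ι), f (v ∘ σ) = f v) :
    ∃ u : E, ‖u‖ = 1 ∧ ‖f fun _ => u‖ = ‖f‖ := by
  let K : Set (ι → E) := (Set.univ.pi fun _ => sphere 0 1) ∩ {v | ‖f v‖ = ‖f‖}
  have hmem (v : ι → E) : v ∈ K ↔ (∀ k, ‖v k‖ = 1) ∧ ‖f v‖ = ‖f‖ := by simp [K]
  have hK : IsCompact K := (isCompact_univ_pi fun _ => isCompact_sphere _ _).inter_right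
    (isClosed_eq f.cont.norm continuous_const)
  have hne : K.Nonempty := (exists_unit_norm_apply_eq_opNorm f).imp fun v hv => (hmem v).2 hv
  obtain ⟨v, hvK, hmax⟩ := hK.exists_isMaxOn (f := fun v => ‖∑ k, v k‖) hne (by fun_prop)
  obtain ⟨hv, hfv⟩ := (hmem v).1 hvK
  have hconst (i j : ι) : v i = v j := by
    by_contra hij
    obtain ⟨w, hw, hfw, hlt⟩ := exists_unit_norm_apply_eq_opNorm_norm_sum_lt hf hv hfv hij
    exact hlt.not_ge (hmax ((hmem w).2 ⟨hw, hfw⟩))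
  rcases isEmpty_or_nonempty ι with _ | ⟨⟨i⟩⟩
  · obtain ⟨e, he⟩ := exists_norm_eq E zero_le_one
    exact ⟨e, he, by rwa [Subsingleton.elim (fun _ => e) v]⟩
  · exact ⟨v i, hv i, by rwa [show (fun _ => v i) = v from funext (hconst i)]⟩

theorem opNorm_le_of_norm_apply_diag_le [InnerProductSpace ℝ E]
    {f : ContinuousMultilinearMap ℝ (fun _ : ι => E) G}
    (hf : ∀ (v : ι → E) (σ : Equiv.Perm ι), f (v ∘ σ) = f v) {C : ℝ} (hC : 0 ≤ C)
    (hdiag : ∀ u, ‖f fun _ => u‖ ≤ C * ‖u‖ ^ Fintype.card ι) : ‖f‖ ≤ C := by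
  refine ContinuousMultilinearMap.opNorm_le_bound hC fun m => ?_
  rcases subsingleton_or_nontrivial (Submodule.span ℝ (Set.range m)) with hsub | hnontriv
  · have hm (k : ι) : m k = 0 := congrArg Subtype.val (Subsingleton.elim
      (⟨m k, Submodule.subset_span ⟨k, rfl⟩⟩ : Submodule.span ℝ (Set.range m)) 0)
    simpa [funext hm] using hdiag 0
  set S := Submodule.span ℝ (Set.range m)
  have : FiniteDimensional ℝ S := FiniteDimensional.span_of_finite ℝ (Set.finite_range m)
  have : ProperSpace S := FiniteDimensional.proper_real S
  set g := f.compContinuousLinearMap fun _ => S.subtypeL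
  have hg_perm (v : ι → S) (σ : Equiv.Perm ι) : g (v ∘ σ) = g v := hf (fun k => (v k : E)) σ
  obtain ⟨u, hu, hgu⟩ := exists_unit_norm_apply_diag_eq_opNorm hg_perm
  have hg : ‖g‖ ≤ C := by
    rw [← hgu]
    exact (hdiag u).trans_eq (by rw [Submodule.norm_coe, hu, one_pow, mul_one])
  exact g.le_of_opNorm_le hg fun k => ⟨m k, Submodule.subset_span ⟨k, rfl⟩⟩

end Banach

section Line

open ComplexConjugate

theorem contDiffAt_one_add_mul_cpow (ζ a : ℂ) (n : WithTop ℕ∞) :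
    ContDiffAt ℝ n (fun t : ℝ => (1 + ζ * t) ^ a) 0 := by
  have han : AnalyticAt ℂ (fun t : ℂ => (1 + ζ * t) ^ a) (Complex.ofRealCLM 0) :=
    AnalyticAt.cpow (by fun_prop) (by fun_prop) (by simp)
  exact (han.contDiffAt.restrict_scalars ℝ).comp 0 Complex.ofRealCLM.contDiff.contDiffAt

theorem eventually_one_add_mul_mem_slitPlane (ζ : ℂ) :
    ∀ᶠ t : ℝ in 𝓝 0, 1 + ζ * t ∈ Complex.slitPlane := by
  have hcont : ContinuousAt (fun t : ℝ => 1 + ζ * t) 0 := by fun_prop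
  exact hcont.eventually_mem (Complex.isOpen_slitPlane.mem_nhds (by simp))

theorem hasDerivAt_one_add_mul_cpow {ζ : ℂ} {t : ℝ} (ht : 1 + ζ * t ∈ Complex.slitPlane) (a : ℂ) :
    HasDerivAt (fun t : ℝ => (1 + ζ * t) ^ a) (a * ζ * (1 + ζ * t) ^ (a - 1)) t := by
  have haff : HasDerivAt (fun s : ℂ => 1 + ζ * s) ζ t := by
    simpa using ((hasDerivAt_id (t : ℂ)).const_mul ζ).const_add 1
  convert (haff.cpow_const ht).comp_ofReal using 1
  ring

theorem deriv_cpow_mul_cpow_eventuallyEq (ζ ω a b : ℂ) :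
    deriv (fun t : ℝ => (1 + ζ * t) ^ (-a) * (1 + ω * t) ^ (-b)) =ᶠ[𝓝 0] fun t =>
      -a * ζ * ((1 + ζ * t) ^ (-(a + 1)) * (1 + ω * t) ^ (-b))
        + -b * ω * ((1 + ζ * t) ^ (-a) * (1 + ω * t) ^ (-(b + 1))) := by
  filter_upwards [eventually_one_add_mul_mem_slitPlane ζ,
    eventually_one_add_mul_mem_slitPlane ω] with t hζt hωt
  rw [((hasDerivAt_one_add_mul_cpow hζt _).fun_mul (hasDerivAt_one_add_mul_cpow hωt _)).deriv,
    neg_add', neg_add']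
  ring

theorem norm_iteratedDeriv_cpow_mul_cpow_le {ζ ω : ℂ} {ρ : ℝ} (hζ : ‖ζ‖ ≤ ρ) (hω : ‖ω‖ ≤ ρ)
    (l : ℕ) {a b : ℝ} (ha : 0 ≤ a) (hb : 0 ≤ b) :
    ‖iteratedDeriv l (fun t : ℝ => (1 + ζ * t) ^ (-a : ℂ) * (1 + ω * t) ^ (-b : ℂ)) 0‖
      ≤ (∏ i ∈ Finset.range l, (a + b + i)) * ρ ^ l := by
  induction l generalizing a b with
  | zero => simp
  | succ l ih =>
    set F : ℝ → ℝ → ℝ → ℂ := fun a b t => (1 + ζ * t) ^ (-a : ℂ) * (1 + ω * t) ^ (-b : ℂ)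
      with hF
    have hderiv : deriv (F a b) =ᶠ[𝓝 0]
        fun t => -a * ζ * F (a + 1) b t + -b * ω * F a (b + 1) t := by
      simpa only [hF, Complex.ofReal_add, Complex.ofReal_one]
        using deriv_cpow_mul_cpow_eventuallyEq ζ ω a b
    have hsmooth (c : ℂ) (a b : ℝ) : ContDiffAt ℝ l (fun t => c * F a b t) 0 :=
      contDiffAt_const.mul ((contDiffAt_one_add_mul_cpow _ _ _).mul
        (contDiffAt_one_add_mul_cpow _ _ _))
    have hprod : ∏ i ∈ Finset.range (l + 1), (a + b + i)
        = (a + b) * ∏ i ∈ Finset.range l, (a + b + 1 + i) := by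
      rw [Finset.prod_range_succ', mul_comm]
      simp only [Nat.cast_add, Nat.cast_one, Nat.cast_zero, add_zero, add_assoc, add_comm (1 : ℝ)]
    have hρ : 0 ≤ ρ := (norm_nonneg ζ).trans hζ
    have hleft := ih (a := a + 1) (b := b) (by positivity) hb
    have hright := ih (a := a) (b := b + 1) ha (by positivity)
    rw [add_right_comm] at hleft
    rw [← add_assoc] at hright
    rw [iteratedDeriv_succ', hderiv.iteratedDeriv_eq,
      iteratedDeriv_fun_add (hsmooth _ _ _) (hsmooth _ _ _), iteratedDeriv_const_mul_field,
      iteratedDeriv_const_mul_field]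
    set P := ∏ i ∈ Finset.range l, (a + b + 1 + (i : ℝ))
    calc _ ≤ ‖-a * ζ * iteratedDeriv l (F (a + 1) b) 0‖
          + ‖-b * ω * iteratedDeriv l (F a (b + 1)) 0‖ := norm_add_le _ _
      _ = a * ‖ζ‖ * ‖iteratedDeriv l (F (a + 1) b) 0‖
          + b * ‖ω‖ * ‖iteratedDeriv l (F a (b + 1)) 0‖ := by
        simp only [norm_mul, norm_neg, Complex.norm_of_nonneg ha, Complex.norm_of_nonneg hb]
      _ ≤ a * ρ * (P * ρ ^ l) + b * ρ * (P * ρ ^ l) := by gcongr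
      _ = _ := by rw [hprod]; ring

theorem ofReal_norm_rpow_eq_cpow_mul_conj_cpow {z : ℂ} (hz : z ∈ Complex.slitPlane) (γ : ℝ) :
    ((‖z‖ ^ γ : ℝ) : ℂ) = z ^ (γ / 2 : ℂ) * (conj z) ^ (γ / 2 : ℂ) := by
  have hexp : conj (γ / 2 : ℂ) = (γ / 2 : ℂ) := by
    rw [map_div₀, Complex.conj_ofReal, map_ofNat]
  rw [Complex.conj_cpow _ _ (Complex.mem_slitPlane_iff_arg.1 hz).1, hexp, Complex.mul_conj,
    Complex.normSq_eq_norm_sq, ← Complex.ofReal_ofNat, ← Complex.ofReal_div,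
    Complex.norm_cpow_real, ← Real.rpow_mul_natCast (norm_nonneg z)]
  norm_num

theorem abs_iteratedDeriv_norm_one_add_mul_rpow_le {γ : ℝ} (hγ : 0 ≤ γ) (ζ : ℂ) (l : ℕ) :
    |iteratedDeriv l (fun t : ℝ => ‖1 + ζ * t‖ ^ (-γ)) 0|
      ≤ (∏ i ∈ Finset.range l, (γ + i)) * ‖ζ‖ ^ l := by
  have hsmooth : ContDiffAt ℝ l (fun t : ℝ => ‖1 + ζ * t‖ ^ (-γ)) 0 := by
    have haff : ContDiffAt ℝ l (fun t : ℝ => 1 + ζ * t) 0 :=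
      contDiffAt_const.add (contDiffAt_const.mul Complex.ofRealCLM.contDiff.contDiffAt)
    exact (haff.norm ℝ (by simp)).rpow_const_of_ne (by simp)
  have hfactor : (fun t : ℝ => ((‖1 + ζ * t‖ ^ (-γ) : ℝ) : ℂ)) =ᶠ[𝓝 0]
      fun t => (1 + ζ * t) ^ (-(γ / 2 : ℝ) : ℂ) * (1 + conj ζ * t) ^ (-(γ / 2 : ℝ) : ℂ) := by
    filter_upwards [eventually_one_add_mul_mem_slitPlane ζ] with t ht
    rw [ofReal_norm_rpow_eq_cpow_mul_conj_cpow ht]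
    simp [neg_div]
  calc |iteratedDeriv l (fun t : ℝ => ‖1 + ζ * t‖ ^ (-γ)) 0|
      = ‖iteratedDeriv l (fun t : ℝ => ((‖1 + ζ * t‖ ^ (-γ) : ℝ) : ℂ)) 0‖ := by
        rw [← Real.norm_eq_abs, ← norm_iteratedFDeriv_eq_norm_iteratedDeriv,
          ← norm_iteratedFDeriv_eq_norm_iteratedDeriv,
          ← Complex.ofRealLI.norm_iteratedFDeriv_comp_left hsmooth le_rfl]
        rfl
    _ ≤ (∏ i ∈ Finset.range l, (γ / 2 + γ / 2 + i)) * ‖ζ‖ ^ l := by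
        rw [hfactor.iteratedDeriv_eq]
        exact norm_iteratedDeriv_cpow_mul_cpow_le le_rfl (Complex.norm_conj ζ).le l
          (by positivity) (by positivity)
    _ = (∏ i ∈ Finset.range l, (γ + i)) * ‖ζ‖ ^ l := by rw [add_halves]

theorem iteratedDeriv_comp_add_smul {𝕜 E F : Type*} [NontriviallyNormedField 𝕜]
    [NormedAddCommGroup E] [NormedSpace 𝕜 E] [NormedAddCommGroup F] [NormedSpace 𝕜 F]
    {f : E → F} {x v : E} {l : ℕ} {t : 𝕜} (hf : ContDiffAt 𝕜 l f (x + t • v)) :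
    iteratedDeriv l (fun s : 𝕜 => f (x + s • v)) t
      = iteratedFDeriv 𝕜 l f (x + t • v) (fun _ => v) := by
  induction l generalizing t with
  | zero => simp
  | succ l ih =>
    have hcont : ContinuousAt (fun s : 𝕜 => x + s • v) t := by fun_prop
    have hev : ∀ᶠ s in 𝓝 t, ContDiffAt 𝕜 (l + 1) f (x + s • v) :=
      hcont.eventually (hf.eventually (by simp))
    have heq : iteratedDeriv l (fun s : 𝕜 => f (x + s • v)) =ᶠ[𝓝 t]
        fun s => iteratedFDeriv 𝕜 l f (x + s • v) (fun _ => v) :=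
      hev.mono fun s hs => ih (hs.of_le (by simp))
    rw [iteratedDeriv_succ, heq.deriv_eq]
    exact hf.deriv_fderiv_add_smul

end Line

section NormRpow

variable {E : Type*} [NormedAddCommGroup E] [InnerProductSpace ℝ E]

theorem contDiffAt_norm_rpow {x : E} (hx : x ≠ 0) (p : ℝ) (n : WithTop ℕ∞) :
    ContDiffAt ℝ n (fun z : E => ‖z‖ ^ p) x :=
  (contDiffAt_norm ℝ hx).rpow_const_of_ne (norm_ne_zero_iff.2 hx)

theorem exists_complex_norm_add_smul_eq {x : E} (hx : x ≠ 0) (v : E) :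
    ∃ ζ : ℂ, ‖ζ‖ = ‖v‖ / ‖x‖ ∧ ∀ t : ℝ, ‖x + t • v‖ = ‖x‖ * ‖1 + ζ * t‖ := by
  set θ := InnerProductGeometry.angle x v
  set ζ : ℂ := (‖v‖ / ‖x‖ : ℝ) * Complex.exp (θ * Complex.I) with hζ
  refine ⟨ζ, ?_, fun t => ?_⟩
  · rw [hζ, norm_mul, Complex.norm_exp_ofReal_mul_I, mul_one,
      Complex.norm_of_nonneg (by positivity)]
  have hre : (1 + ζ * t).re = 1 + ‖v‖ / ‖x‖ * Real.cos θ * t := by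
    simp [hζ, Complex.exp_ofReal_mul_I_re]
  have him : (1 + ζ * t).im = ‖v‖ / ‖x‖ * Real.sin θ * t := by
    simp [hζ, Complex.exp_ofReal_mul_I_im]
  have hx' : ‖x‖ ≠ 0 := norm_ne_zero_iff.2 hx
  rw [← sq_eq_sq₀ (norm_nonneg _) (by positivity), norm_add_sq_real, inner_smul_right,
    ← InnerProductGeometry.cos_angle_mul_norm_mul_norm, norm_smul, mul_pow, mul_pow,
    Real.norm_eq_abs, sq_abs, Complex.sq_norm, Complex.normSq_apply, hre, him]
  field_simp
  linear_combination (-‖v‖ ^ 2 * t ^ 2) * Real.sin_sq_add_cos_sq θ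

theorem norm_iteratedFDeriv_norm_rpow_diag_le {γ : ℝ} (hγ : 0 ≤ γ) (l : ℕ) {x : E} (hx : x ≠ 0)
    (v : E) :
    ‖iteratedFDeriv ℝ l (fun z : E => ‖z‖ ^ (-γ)) x (fun _ => v)‖
      ≤ (∏ i ∈ Finset.range l, (γ + i)) * ‖x‖ ^ (-(γ + l)) * ‖v‖ ^ l := by
  obtain ⟨ζ, hζ, hline⟩ := exists_complex_norm_add_smul_eq hx v
  have hx0 : 0 < ‖x‖ := norm_pos_iff.2 hx
  have hrestrict : iteratedFDeriv ℝ l (fun z : E => ‖z‖ ^ (-γ)) x (fun _ => v)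
      = ‖x‖ ^ (-γ) * iteratedDeriv l (fun t : ℝ => ‖1 + ζ * t‖ ^ (-γ)) 0 := by
    have hcomp := iteratedDeriv_comp_add_smul (f := fun z : E => ‖z‖ ^ (-γ)) (x := x) (v := v)
      (l := l) (t := (0 : ℝ)) (contDiffAt_norm_rpow (by simpa using hx) _ _)
    simp only [zero_smul, add_zero] at hcomp
    simp only [← hcomp, hline, Real.mul_rpow (norm_nonneg _) (norm_nonneg _),
      iteratedDeriv_const_mul_field]
  calc ‖iteratedFDeriv ℝ l (fun z : E => ‖z‖ ^ (-γ)) x (fun _ => v)‖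
      = ‖x‖ ^ (-γ) * |iteratedDeriv l (fun t : ℝ => ‖1 + ζ * t‖ ^ (-γ)) 0| := by
        rw [hrestrict, norm_mul, Real.norm_of_nonneg (by positivity), Real.norm_eq_abs]
    _ ≤ ‖x‖ ^ (-γ) * ((∏ i ∈ Finset.range l, (γ + i)) * (‖v‖ / ‖x‖) ^ l) := by
        rw [← hζ]
        gcongr
        exact abs_iteratedDeriv_norm_one_add_mul_rpow_le hγ ζ l
    _ = (∏ i ∈ Finset.range l, (γ + i)) * ‖x‖ ^ (-(γ + l)) * ‖v‖ ^ l := by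
        rw [neg_add, ← sub_eq_add_neg, Real.rpow_sub_natCast hx0.ne']
        ring

theorem deriv_bounds_of_norm_rpow_general {γ : ℝ} (hγ : 0 ≤ γ) (l : ℕ) {x : E} (hx : x ≠ 0) :
    ‖iteratedFDeriv ℝ l (fun z : E => ‖z‖ ^ (-γ)) x‖
      ≤ (∏ i ∈ Finset.range l, (γ + i)) * ‖x‖ ^ (-(γ + l)) :=
  opNorm_le_of_norm_apply_diag_le
    (fun v σ => (contDiffAt_norm_rpow hx _ _).iteratedFDeriv_comp_perm v σ) (by positivity)
    fun v => by simpa using norm_iteratedFDeriv_norm_rpow_diag_le hγ l hx v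

end NormRpow

/-- Bounds for the iterated partial derivatives of `x ↦ ‖x‖^{-γ}`:
`|∂_{i₁} ⋯ ∂_{i_l} ‖x‖^{-γ}| ≤ D_l ‖x‖^{-(γ+l)}` with `D_l = γ(γ+1)⋯(γ+l-1)`. -/
theorem deriv_bounds_of_norm_rpow
    (n : ℕ) (hn : 1 ≤ n) (γ : ℝ) (hγ : 0 < γ) (l : ℕ)
    (D : ℝ) (hD : D = ∏ i ∈ Finset.range l, (γ + i)) :
    ∀ x : EuclideanSpace ℝ (Fin n), x ≠ 0 →
      ∀ idx : Fin l → Fin n,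
        |iteratedFDeriv ℝ l (fun z : EuclideanSpace ℝ (Fin n) => ‖z‖ ^ (-γ)) x
            (fun j => EuclideanSpace.single (idx j) (1:ℝ))|
          ≤ D * ‖x‖ ^ (-(γ + l)) := by
  intro x hx idx
  simpa [hD] using ContinuousMultilinearMap.le_of_opNorm_le
    (deriv_bounds_of_norm_rpow_general hγ.le l hx) fun j => EuclideanSpace.single (idx j) (1 : ℝ)
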